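/- Let m ≥ 2, let U ⊆ ℝ^m be an open box (a product of open intervals), and let h : U → ℝ be smooth and positive. Then the following are equivalent: (a) ∂²(log h)/∂x_i∂x_j ≡ 0 on U for all pairs i ≠ j; (b) for every closed box K = ∏_{k=1}^m [a_k,b_k] ⊆ U and every k ∈ {1,…,m} there exist p_1 ∈ (a_1,b_1), …, p_k ∈ (a_k,b_k) such that all 2^k subboxes of the form ∏_{l=1}^k I_l × ∏_{l=k+1}^m [a_l,b_l], where each I_l is either [a_l,p_l] or [p_l,b_l], have equal integrals of h. -/

import Mathlib

open MeasureTheory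

noncomputable section

/-- Second mixed partial derivative `∂²(log h)/∂x_i∂x_j` at `x`. -/
def logpd2 {m : ℕ} (h : (Fin m → ℝ) → ℝ) (k l : Fin m) (x : Fin m → ℝ) : ℝ :=
  fderiv ℝ (fun y => fderiv ℝ (fun z => Real.log (h z)) y (Pi.single k (1:ℝ)))
    x (Pi.single l 1)

/-- The `h`-volume of the subbox of `K = ∏_l [a_l,b_l]` in which, for each of the first
`k` coordinates `l`, the factor `[a_l,b_l]` is replaced by `[p_l,b_l]` (if `ε l = true`)
or by `[a_l,p_l]` (if `ε l = false`). -/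
def splitVol {m : ℕ} (h : (Fin m → ℝ) → ℝ) (a b p : Fin m → ℝ) (k : ℕ)
    (ε : Fin m → Bool) : ℝ :=
  ∫ x in Set.Icc
      (fun l : Fin m => if l.val < k ∧ ε l then p l else a l)
      (fun l : Fin m => if l.val < k ∧ ¬ ε l then p l else b l),
    h x

/-!
If the mixed derivatives of `log h` vanish, then `log h` separates additively on every closed box,
so `h` is a product of functions of one variable there, and the medians of the factors split the box
into parts of equal volume.

Conversely, merging the `2 ^ m` parts shows that every box is bisected by a hyperplane `x i = p`
which also bisects the parts of the box on either side of some hyperplane `x j = q`. A box has only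
one bisecting hyperplane normal to `i`, so the levels `y` for which `x i = p` bisects the part
`x j ≤ y` have a further such level between any two of them; being closed, this set of levels is
everything. Hence `x i = p` bisects every slab `u ≤ x j ≤ v`, and the volumes of two slabs, as
functions of the end of the `i`-th side, have common midpoints and are therefore affinely related.
So the volumes of four boxes at the corners of a rectangle in the `i`-`j`-plane satisfy
`V₁ * V₂ = V₃ * V₄`, and shrinking the boxes to points gives the same relation for the values of
`h`, that is, the vanishing of the mixed differences of `log h`.
-/

section

open Set Function Filter Topology

theorem forall_mem_Icc_eq_of_exists_mem_Ioo_eq {α β : Type*} [ConditionallyCompleteLinearOrder α]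
    [TopologicalSpace α] [OrderTopology α] [TopologicalSpace β] [T1Space β] {G : α → β} {a b : α}
    {c : β} (hG : ContinuousOn G (Icc a b)) (ha : G a = c) (hb : G b = c)
    (hgap : ∀ s ∈ Icc a b, ∀ t ∈ Icc a b, s < t → G s = c → G t = c → ∃ q ∈ Ioo s t, G q = c) :
    ∀ y ∈ Icc a b, G y = c := by
  intro y hy
  by_contra hyc
  set Z := Icc a b ∩ G ⁻¹' {c}
  have hZ : IsClosed Z := hG.preimage_isClosed_of_isClosed isClosed_Icc isClosed_singleton
  have hab : a ≤ b := hy.1.trans hy.2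
  have hbelow : BddAbove (Z ∩ Iic y) := ⟨y, fun _ hx => hx.2⟩
  have habove : BddBelow (Z ∩ Ici y) := ⟨y, fun _ hx => hx.2⟩
  obtain ⟨⟨hs, hsc⟩, hsy⟩ := (hZ.inter isClosed_Iic).csSup_mem
    ⟨a, ⟨left_mem_Icc.2 hab, ha⟩, hy.1⟩ hbelow
  obtain ⟨⟨ht, htc⟩, hyt⟩ := (hZ.inter isClosed_Ici).csInf_mem
    ⟨b, ⟨right_mem_Icc.2 hab, hb⟩, hy.2⟩ habove
  have hsy' : sSup (Z ∩ Iic y) < y := lt_of_le_of_ne hsy fun h => hyc (h ▸ hsc)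
  obtain ⟨q, hq, hqc⟩ := hgap _ hs _ ht (hsy'.trans_le hyt) hsc htc
  have hqZ : q ∈ Z := ⟨⟨hs.1.trans hq.1.le, hq.2.le.trans ht.2⟩, hqc⟩
  rcases le_total q y with hqy | hyq
  · exact hq.1.not_ge (le_csSup hbelow ⟨hqZ, hqy⟩)
  · exact hq.2.not_ge (csInf_le habove ⟨hqZ, hyq⟩)

theorem exists_forall_sub_eq_mul_sub_of_common_midpoints {φ ψ : ℝ → ℝ} {a b : ℝ}
    (hφ : ContinuousOn φ (Icc a b)) (hψ : ContinuousOn ψ (Icc a b)) (hne : ψ a ≠ ψ b)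
    (hmid : ∀ s ∈ Icc a b, ∀ t ∈ Icc a b, s < t →
      ∃ p ∈ Ioo s t, φ p - φ s = φ t - φ p ∧ ψ p - ψ s = ψ t - ψ p) :
    ∃ k, ∀ x ∈ Icc a b, ∀ y ∈ Icc a b, φ y - φ x = k * (ψ y - ψ x) := by
  have hne' : ψ b - ψ a ≠ 0 := sub_ne_zero.2 hne.symm
  set k := (φ b - φ a) / (ψ b - ψ a)
  have hkb : k * (ψ b - ψ a) = φ b - φ a := div_mul_cancel₀ _ hne'
  have hconst : ∀ x ∈ Icc a b, φ x - k * ψ x = φ a - k * ψ a := by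
    refine forall_mem_Icc_eq_of_exists_mem_Ioo_eq (hφ.sub (continuousOn_const.mul hψ)) rfl
      (by linarith) fun s hs t ht hst hGs hGt => ?_
    obtain ⟨p, hp, hφp, hψp⟩ := hmid s hs t ht hst
    exact ⟨p, hp, by linear_combination (hGs + hGt + hφp - k * hψp) / 2⟩
  exact ⟨k, fun x hx y hy => by linear_combination hconst y hy - hconst x hx⟩

section Corners

variable {ι : Type*} {α : ι → Type*} [DecidableEq ι] [∀ l, Preorder (α l)] {a b : ∀ l, α l} {i : ι}

theorem update_lt_update (hab : ∀ l, a l < b l) {s t : α i} (hst : s < t) (l : ι) :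
    update a i s l < update b i t l := by
  obtain rfl | hl := eq_or_ne l i
  · simpa using hst
  · simpa [hl] using hab l

theorem Icc_update_update_subset {s t : α i} (hs : a i ≤ s) (ht : t ≤ b i) :
    Icc (update a i s) (update b i t) ⊆ Icc a b :=
  Icc_subset_Icc (le_update_self_iff.2 hs) (update_le_self_iff.2 ht)

theorem Icc_update_right {p : α i} (hp : p ≤ b i) :
    Icc a (update b i p) = Icc a b ∩ {x : ∀ l, α l | x i ≤ p} := by
  ext x
  simp only [mem_Icc, le_update_iff, mem_inter_iff, mem_ofPred_eq]
  refine ⟨fun hx => ⟨⟨hx.1, fun l => ?_⟩, hx.2.1⟩, fun hx => ⟨hx.1.1, hx.2, fun l _ => hx.1.2 l⟩⟩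
  obtain rfl | hl := eq_or_ne l i
  exacts [hx.2.1.trans hp, hx.2.2 l hl]

theorem Icc_update_left {p : α i} (hp : a i ≤ p) :
    Icc (update a i p) b = Icc a b ∩ {x : ∀ l, α l | p ≤ x i} := by
  ext x
  simp only [mem_Icc, update_le_iff, mem_inter_iff, mem_ofPred_eq]
  refine ⟨fun hx => ⟨⟨fun l => ?_, hx.2⟩, hx.1.1⟩, fun hx => ⟨⟨hx.2, fun l _ => hx.1.1 l⟩, hx.1.2⟩⟩
  obtain rfl | hl := eq_or_ne l i
  exacts [hp.trans hx.1.1, hx.1.2 l hl]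

end Corners

/-- The `h`-volume of the closed box with lower corner `a` and upper corner `b`. -/
def boxVol {ι : Type*} [Fintype ι] (h : (ι → ℝ) → ℝ) (a b : ι → ℝ) : ℝ :=
  ∫ x in Icc a b, h x

theorem boxVol_pos {ι : Type*} [Fintype ι] {h : (ι → ℝ) → ℝ} {a b : ι → ℝ} (hab : ∀ l, a l < b l)
    (hint : IntegrableOn h (Icc a b))
    (hpos : ∀ x ∈ Icc a b, 0 < h x) : 0 < boxVol h a b := by
  have hnonneg : 0 ≤ᵐ[volume.restrict (Icc a b)] h :=
    (ae_restrict_mem measurableSet_Icc).mono fun x hx => (hpos x hx).le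
  have hsupp : support h ∩ Icc a b = Icc a b :=
    inter_eq_right.2 fun x hx => (hpos x hx).ne'
  rw [boxVol, setIntegral_pos_iff_support_of_nonneg_ae hnonneg hint,
    hsupp, Real.volume_Icc_pi, CanonicallyOrderedAdd.prod_pos]
  exact fun l _ => ENNReal.ofReal_pos.2 (sub_pos.2 (hab l))

theorem tendsto_boxVol_div_pow {ι : Type*} [Fintype ι] {h : (ι → ℝ) → ℝ} {z : ι → ℝ}
    {U : Set (ι → ℝ)} (hU : IsOpen U) (hcont : ContinuousOn h U) (hz : z ∈ U) :
    Tendsto (fun δ => boxVol h (fun l => z l - δ) (fun l => z l + δ) / (2 * δ) ^ Fintype.card ι)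
      (𝓝[>] 0) (𝓝 (h z)) := by
  have hcube : ∀ δ > 0, Metric.closedBall z δ = Icc (fun l => z l - δ) fun l => z l + δ :=
    fun δ hδ => by simp_rw [closedBall_pi z hδ.le, Real.closedBall_eq_Icc, pi_univ_Icc]
  have hvol : ∀ δ > 0, volume.real (Metric.closedBall z δ) = (2 * δ) ^ Fintype.card ι :=
    fun δ hδ => by
      rw [Measure.real, Real.volume_pi_closedBall z hδ.le, ENNReal.toReal_ofReal (by positivity)]
  have hshrink : Tendsto (Metric.closedBall z) (𝓝[>] 0) (𝓝 z).smallSets :=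
    (tendsto_closedBall_smallSets z).mono_left nhdsWithin_le_nhds
  have hlittle := (hcont.continuousAt (hU.mem_nhds hz)).integral_sub_linear_isLittleO_ae
    (hcont.stronglyMeasurableAtFilter hU z hz) hshrink (fun δ => (2 * δ) ^ Fintype.card ι)
    (eventually_mem_nhdsWithin.mono hvol)
  refine tendsto_sub_nhds_zero_iff.1 (hlittle.tendsto_div_nhds_zero.congr' ?_)
  filter_upwards [self_mem_nhdsWithin] with δ hδ
  have hne : (2 * δ) ^ Fintype.card ι ≠ 0 := pow_ne_zero _ (mul_pos two_pos hδ).ne'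
  rw [boxVol, ← hcube δ hδ, smul_eq_mul, sub_div, mul_div_cancel_left₀ _ hne]

theorem eventually_forall_le_sub_and_forall_add_le {ι : Type*} [Finite ι] {A B z : ι → ℝ}
    (hz : z ∈ univ.pi fun l => Ioo (A l) (B l)) :
    ∀ᶠ δ in 𝓝[>] (0 : ℝ), (∀ l, A l ≤ z l - δ) ∧ ∀ l, z l + δ ≤ B l := by
  refine eventually_nhdsWithin_of_eventually_nhds ?_
  rw [eventually_and, eventually_all, eventually_all]
  refine ⟨fun l => ?_, fun l => ?_⟩
  · filter_upwards [gt_mem_nhds (sub_pos.2 (hz l trivial).1)] with δ hδ using (lt_sub_comm.1 hδ).le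
  · filter_upwards [gt_mem_nhds (sub_pos.2 (hz l trivial).2)] with δ hδ
      using (lt_sub_iff_add_lt'.1 hδ).le

section Boxes

variable {ι : Type*} [Fintype ι] [DecidableEq ι] {h : (ι → ℝ) → ℝ} {a b : ι → ℝ} {i j : ι}

theorem boxVol_update_add_boxVol_update (hint : IntegrableOn h (Icc a b)) {p : ℝ}
    (hp : p ∈ Icc (a i) (b i)) :
    boxVol h a (update b i p) + boxVol h (update a i p) b = boxVol h a b := by
  have hunion : Icc a (update b i p) ∪ Icc (update a i p) b = Icc a b := by
    rw [Icc_update_right hp.2, Icc_update_left hp.1, ← inter_union_distrib_left]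
    exact inter_eq_left.2 fun x _ => le_total (x i) p
  have hdisj : AEDisjoint volume (Icc a (update b i p)) (Icc (update a i p) b) := by
    refine measure_mono_null ?_ (Measure.pi_hyperplane (fun _ : ι => (volume : Measure ℝ)) i p)
    rw [Icc_update_right hp.2, Icc_update_left hp.1]
    exact fun x hx => le_antisymm hx.1.2 hx.2.2
  rw [boxVol, boxVol, boxVol, ← setIntegral_union₀ hdisj measurableSet_Icc.nullMeasurableSet
    (hint.mono_set (hunion ▸ subset_union_left)) (hint.mono_set (hunion ▸ subset_union_right)),
    hunion]

theorem continuousOn_boxVol_update (hint : IntegrableOn h (Icc a b)) :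
    ContinuousOn (fun x => boxVol h a (update b i x)) (Icc (a i) (b i)) := by
  have hcont : Continuous fun x => ∫ y in Icc a b, {y : ι → ℝ | y i ≤ x}.indicator h y := by
    refine continuous_iff_continuousAt.2 fun x₀ => continuousAt_of_dominated
      (bound := fun y => ‖h y‖)
      (.of_forall fun x => hint.aestronglyMeasurable.indicator
        (measurableSet_le (measurable_pi_apply i) measurable_const))
      (.of_forall fun x => .of_forall fun y => norm_indicator_le_norm_self h y) hint.norm ?_
    have hoff : ∀ᵐ y : ι → ℝ ∂volume.restrict (Icc a b), y i ≠ x₀ :=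
      ae_restrict_of_ae <| measure_eq_zero_iff_ae_notMem.1 <|
        Measure.pi_hyperplane (fun _ : ι => (volume : Measure ℝ)) i x₀
    filter_upwards [hoff] with y hy
    refine continuousAt_const (y := {z : ι → ℝ | z i ≤ x₀}.indicator h y) |>.congr ?_
    rcases hy.lt_or_gt with hlt | hgt
    · filter_upwards [lt_mem_nhds hlt] with x hx
      simp [indicator, hlt.le, hx.le]
    · filter_upwards [gt_mem_nhds hgt] with x hx
      simp [indicator, hgt.not_ge, hx.not_ge]
  refine hcont.continuousOn.congr fun x hx => ?_
  rw [boxVol, Icc_update_right hx.2]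
  exact (setIntegral_indicator (measurableSet_le (measurable_pi_apply i) measurable_const)).symm

/-- The difference of the `h`-volumes of the two parts into which the hyperplane `x i = p` cuts
the box with corners `a` and `b`; it vanishes when the hyperplane bisects the box. -/
def imbalance (h : (ι → ℝ) → ℝ) (i : ι) (p : ℝ) (a b : ι → ℝ) : ℝ :=
  boxVol h a (update b i p) - boxVol h (update a i p) b

theorem boxVol_update_sub_boxVol_update (hint : IntegrableOn h (Icc a b)) {s t : ℝ}
    (hs : a i ≤ s) (hst : s ≤ t) (ht : t ≤ b i) :
    boxVol h a (update b i t) - boxVol h a (update b i s) =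
      boxVol h (update a i s) (update b i t) := by
  have hsub : Icc a (update b i t) ⊆ Icc a b := Icc_subset_Icc_right (update_le_self_iff.2 ht)
  have hcut := boxVol_update_add_boxVol_update (i := i) (p := s) (hint.mono_set hsub)
    ⟨hs, by simpa using hst⟩
  rw [update_idem] at hcut
  linarith

theorem imbalance_update_update (hint : IntegrableOn h (Icc a b)) {s p t : ℝ}
    (hs : a i ≤ s) (hsp : s ≤ p) (hpt : p ≤ t) (ht : t ≤ b i) :
    imbalance h i p (update a i s) (update b i t) =
      (boxVol h a (update b i p) - boxVol h a (update b i s)) -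
        (boxVol h a (update b i t) - boxVol h a (update b i p)) := by
  rw [imbalance, update_idem, update_idem,
    boxVol_update_sub_boxVol_update hint hs hsp (hpt.trans ht),
    boxVol_update_sub_boxVol_update hint (hs.trans hsp) hpt ht]

theorem imbalance_add_imbalance (hij : i ≠ j) (hint : IntegrableOn h (Icc a b)) {p y : ℝ}
    (hp : p ∈ Icc (a i) (b i)) (hy : y ∈ Icc (a j) (b j)) :
    imbalance h i p a (update b j y) + imbalance h i p (update a j y) b = imbalance h i p a b := by
  have hlower := boxVol_update_add_boxVol_update (i := j) (p := y)
    (hint.mono_set (Icc_subset_Icc_right (update_le_self_iff.2 hp.2)))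
    (by simpa [hij.symm] using hy)
  have hupper := boxVol_update_add_boxVol_update (i := j) (p := y)
    (hint.mono_set (Icc_subset_Icc_left (le_update_self_iff.2 hp.1)))
    (by simpa [hij.symm] using hy)
  rw [update_comm hij] at hlower hupper
  simp only [imbalance]
  linarith

theorem imbalance_update_sub_imbalance_update (hij : i ≠ j) (hint : IntegrableOn h (Icc a b))
    {p s t : ℝ} (hp : p ∈ Icc (a i) (b i)) (hs : a j ≤ s) (hst : s ≤ t) (ht : t ≤ b j) :
    imbalance h i p a (update b j t) - imbalance h i p a (update b j s) =
      imbalance h i p (update a j s) (update b j t) := by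
  have hcut := imbalance_add_imbalance hij (p := p) (y := s) (b := update b j t)
    (hint.mono_set (Icc_subset_Icc_right (update_le_self_iff.2 ht)))
    (by simpa [hij] using hp) ⟨hs, by simpa using hst⟩
  rw [update_idem] at hcut
  linarith

theorem imbalance_strictMonoOn (hab : ∀ l, a l < b l) (hint : IntegrableOn h (Icc a b))
    (hpos : ∀ x ∈ Icc a b, 0 < h x) :
    StrictMonoOn (fun p => imbalance h i p a b) (Icc (a i) (b i)) := by
  intro p hp p' hp' hpp'
  have hslab : 0 < boxVol h (update a i p) (update b i p') :=
    have hsub := Icc_update_update_subset hp.1 hp'.2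
    boxVol_pos (update_lt_update hab hpp') (hint.mono_set hsub) fun x hx => hpos x (hsub hx)
  have hsplit := boxVol_update_sub_boxVol_update hint hp.1 hpp'.le hp'.2
  have hcut := boxVol_update_add_boxVol_update hint hp
  have hcut' := boxVol_update_add_boxVol_update hint hp'
  simp only [imbalance]
  linarith

theorem continuousOn_imbalance_update (hij : i ≠ j) (hint : IntegrableOn h (Icc a b)) {p : ℝ}
    (hp : p ∈ Icc (a i) (b i)) :
    ContinuousOn (fun y => imbalance h i p a (update b j y)) (Icc (a j) (b j)) := by
  have hlower := continuousOn_boxVol_update (i := j)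
    (hint.mono_set (Icc_subset_Icc_right (update_le_self_iff.2 hp.2)))
  have hupper := continuousOn_boxVol_update (i := j)
    (hint.mono_set (Icc_subset_Icc_left (le_update_self_iff.2 hp.1)))
  simp only [update_of_ne hij.symm, update_comm hij] at hlower hupper
  exact hlower.sub hupper

/-- Every box in `U` is bisected by a hyperplane `x i = p` that also bisects the part of the box
below some hyperplane `x j = q` (hence the part above it as well): what remains of the splitting
condition once all directions other than `i` and `j` are merged. -/
def HasCommonBisectors (h : (ι → ℝ) → ℝ) (i j : ι) (U : Set (ι → ℝ)) : Prop :=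
  ∀ a b : ι → ℝ, (∀ l, a l < b l) → Icc a b ⊆ U → ∃ p ∈ Ioo (a i) (b i), ∃ q ∈ Ioo (a j) (b j),
    imbalance h i p a b = 0 ∧ imbalance h i p a (update b j q) = 0

theorem HasCommonBisectors.mono {U V : Set (ι → ℝ)} (hbis : HasCommonBisectors h i j V)
    (hUV : U ⊆ V) : HasCommonBisectors h i j U :=
  fun a b hab hsub => hbis a b hab (hsub.trans hUV)

theorem HasCommonBisectors.imbalance_update_eq_zero (hbis : HasCommonBisectors h i j (Icc a b))
    (hij : i ≠ j) (hab : ∀ l, a l < b l) (hint : IntegrableOn h (Icc a b))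
    (hpos : ∀ x ∈ Icc a b, 0 < h x) {p : ℝ} (hp : p ∈ Icc (a i) (b i))
    (hp0 : imbalance h i p a b = 0) :
    ∀ y ∈ Icc (a j) (b j), imbalance h i p a (update b j y) = 0 := by
  refine forall_mem_Icc_eq_of_exists_mem_Ioo_eq (continuousOn_imbalance_update hij hint hp) ?_
    (by rwa [update_eq_self]) fun s hs t ht hst hs0 ht0 => ?_
  · have := imbalance_add_imbalance hij hint hp (left_mem_Icc.2 (hab j).le)
    rwa [update_eq_self, hp0, add_eq_right] at this
  · have hsub := Icc_update_update_subset hs.1 ht.2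
    have hlt := update_lt_update (i := j) hab hst
    obtain ⟨p', hp', q, hq, hp'0, hq0⟩ := hbis _ _ hlt hsub
    have hpp' : p = p' :=
      (imbalance_strictMonoOn hlt (hint.mono_set hsub) fun x hx => hpos x (hsub hx)).injOn
        (by simpa [hij] using hp) (Ioo_subset_Icc_self hp') <| by
          simp [← imbalance_update_sub_imbalance_update hij hint hp hs.1 hst.le ht.2, hp'0, hs0,
            ht0]
    rw [update_self, update_self] at hq
    rw [update_idem, ← hpp'] at hq0
    refine ⟨q, hq, ?_⟩
    rwa [← imbalance_update_sub_imbalance_update hij hint hp hs.1 hq.1.le (hq.2.le.trans ht.2), hs0,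
      sub_zero] at hq0

theorem HasCommonBisectors.imbalance_update_update_eq_zero
    (hbis : HasCommonBisectors h i j (Icc a b)) (hij : i ≠ j) (hab : ∀ l, a l < b l)
    (hint : IntegrableOn h (Icc a b)) (hpos : ∀ x ∈ Icc a b, 0 < h x) {p : ℝ}
    (hp : p ∈ Icc (a i) (b i)) (hp0 : imbalance h i p a b = 0) {u v : ℝ} (hu : a j ≤ u)
    (huv : u ≤ v) (hv : v ≤ b j) : imbalance h i p (update a j u) (update b j v) = 0 := by
  have hzero := hbis.imbalance_update_eq_zero hij hab hint hpos hp hp0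
  rw [← imbalance_update_sub_imbalance_update hij hint hp hu huv hv,
    hzero v ⟨hu.trans huv, hv⟩, hzero u ⟨hu, huv.trans hv⟩, sub_zero]

theorem HasCommonBisectors.exists_mem_Ioo_forall_sub_eq_sub
    (hbis : HasCommonBisectors h i j (Icc a b)) (hij : i ≠ j) (hab : ∀ l, a l < b l)
    (hint : IntegrableOn h (Icc a b)) (hpos : ∀ x ∈ Icc a b, 0 < h x) {s t : ℝ} (hs : a i ≤ s)
    (hst : s < t) (ht : t ≤ b i) :
    ∃ p ∈ Ioo s t, ∀ u v, a j ≤ u → u ≤ v → v ≤ b j →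
      boxVol h (update a j u) (update (update b j v) i p) -
          boxVol h (update a j u) (update (update b j v) i s) =
        boxVol h (update a j u) (update (update b j v) i t) -
          boxVol h (update a j u) (update (update b j v) i p) := by
  have hsub := Icc_update_update_subset hs ht
  have hlt := update_lt_update (i := i) hab hst
  obtain ⟨p, hp, -, -, hp0, -⟩ := hbis _ _ hlt hsub
  refine ⟨p, by simpa using hp, fun u v hu huv hv => ?_⟩
  have hzero := (hbis.mono hsub).imbalance_update_update_eq_zero hij hlt (hint.mono_set hsub)
    (fun x hx => hpos x (hsub hx)) (Ioo_subset_Icc_self hp) hp0 (u := u) (v := v)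
    (by simpa [hij.symm] using hu) huv (by simpa [hij.symm] using hv)
  rw [update_self, update_self] at hp
  rw [update_comm hij, update_comm hij, imbalance_update_update
    (hint.mono_set (Icc_update_update_subset hu hv)) (by simpa [hij] using hs) hp.1.le hp.2.le
    (by simpa [hij] using ht)] at hzero
  exact sub_eq_zero.1 hzero

theorem HasCommonBisectors.exists_forall_boxVol_eq_mul_boxVol
    (hbis : HasCommonBisectors h i j (Icc a b)) (hij : i ≠ j) (hab : ∀ l, a l < b l)
    (hint : IntegrableOn h (Icc a b)) (hpos : ∀ x ∈ Icc a b, 0 < h x) {u v u' v' : ℝ}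
    (hu : a j ≤ u) (huv : u ≤ v) (hv : v ≤ b j) (hu' : a j ≤ u') (huv' : u' < v') (hv' : v' ≤ b j) :
    ∃ k, ∀ s t, a i ≤ s → s ≤ t → t ≤ b i →
      boxVol h (update (update a j u) i s) (update (update b j v) i t) =
        k * boxVol h (update (update a j u') i s) (update (update b j v') i t) := by
  have hdiff : ∀ {u v s t : ℝ}, a j ≤ u → v ≤ b j → a i ≤ s → s ≤ t → t ≤ b i →
      boxVol h (update a j u) (update (update b j v) i t) -
          boxVol h (update a j u) (update (update b j v) i s) =
        boxVol h (update (update a j u) i s) (update (update b j v) i t) :=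
    fun hu hv hs hst ht =>
      boxVol_update_sub_boxVol_update (hint.mono_set (Icc_update_update_subset hu hv))
        (by simpa [hij] using hs) hst (by simpa [hij] using ht)
  have hcont : ∀ {u v : ℝ}, a j ≤ u → v ≤ b j →
      ContinuousOn (fun x => boxVol h (update a j u) (update (update b j v) i x))
        (Icc (a i) (b i)) := fun {u v} hu hv => by
    simpa only [update_of_ne hij] using
      continuousOn_boxVol_update (i := i) (hint.mono_set (Icc_update_update_subset hu hv))
  have hlt : boxVol h (update a j u') (update (update b j v') i (a i)) <
      boxVol h (update a j u') (update (update b j v') i (b i)) := by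
    rw [← sub_pos, hdiff hu' hv' le_rfl (hab i).le le_rfl]
    have hsub := (Icc_update_update_subset (i := i) (update_of_ne hij u' a).le
      (update_of_ne hij v' b).ge).trans (Icc_update_update_subset hu' hv')
    exact boxVol_pos (update_lt_update (update_lt_update hab huv') (hab i)) (hint.mono_set hsub)
      fun x hx => hpos x (hsub hx)
  obtain ⟨k, hk⟩ := exists_forall_sub_eq_mul_sub_of_common_midpoints (hcont hu hv) (hcont hu' hv')
    hlt.ne fun s hs t ht hst => by
      obtain ⟨p, hp, hmid⟩ :=
        hbis.exists_mem_Ioo_forall_sub_eq_sub hij hab hint hpos hs.1 hst ht.2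
      exact ⟨p, hp, hmid u v hu huv hv, hmid u' v' hu' huv'.le hv'⟩
  refine ⟨k, fun s t hs hst ht => ?_⟩
  rw [← hdiff hu hv hs hst ht, ← hdiff hu' hv' hs hst ht]
  exact hk s ⟨hs, hst.trans ht⟩ t ⟨hs.trans hst, ht⟩

theorem HasCommonBisectors.boxVol_mul_boxVol {A B : ι → ℝ}
    (hbis : HasCommonBisectors h i j (Icc A B)) (hij : i ≠ j) (hint : IntegrableOn h (Icc A B))
    (hpos : ∀ x ∈ Icc A B, 0 < h x) (hAa : A ≤ a) (hab : ∀ l, a l < b l) (hbB : b ≤ B)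
    {s t u v : ℝ} (hs : A i ≤ s) (hst : s < t) (ht : t ≤ B i) (hu : A j ≤ u) (huv : u < v)
    (hv : v ≤ B j) :
    boxVol h a b * boxVol h (update (update a j u) i s) (update (update b j v) i t) =
      boxVol h (update a j u) (update b j v) * boxVol h (update a i s) (update b i t) := by
  set a₀ := update (update a j (A j)) i (A i)
  set b₀ := update (update b j (B j)) i (B i)
  have hsub : Icc a₀ b₀ ⊆ Icc A B := Icc_subset_Icc
    (le_update_iff.2 ⟨le_rfl, fun l _ => le_update_iff.2 ⟨le_rfl, fun l _ => hAa l⟩ l⟩)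
    (update_le_iff.2 ⟨le_rfl, fun l _ => update_le_iff.2 ⟨le_rfl, fun l _ => hbB l⟩ l⟩)
  have hlt : ∀ l, a₀ l < b₀ l :=
    update_lt_update (update_lt_update hab (hu.trans_lt (huv.trans_le hv)))
      (hs.trans_lt (hst.trans_le ht))
  have hai : a₀ i = A i := by simp [a₀]
  have hbi : b₀ i = B i := by simp [b₀]
  have haj : a₀ j = A j := by simp [a₀, hij.symm]
  have hbj : b₀ j = B j := by simp [b₀, hij.symm]
  have ha : ∀ x y, update (update a₀ j y) i x = update (update a j y) i x := fun x y => by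
    simp [a₀, update_comm hij]
  have hb : ∀ x y, update (update b₀ j y) i x = update (update b j y) i x := fun x y => by
    simp [b₀, update_comm hij]
  obtain ⟨k, hk⟩ := (hbis.mono hsub).exists_forall_boxVol_eq_mul_boxVol hij hlt
    (hint.mono_set hsub) (fun x hx => hpos x (hsub hx)) (u := a j) (v := b j) (u' := u) (v' := v)
    (haj ▸ hAa j) (hab j).le (hbj ▸ hbB j) (haj ▸ hu) huv (hbj ▸ hv)
  simp only [ha, hb, hai, hbi, update_eq_self] at hk
  have hk₁ := hk (a i) (b i) (hAa i) (hab i).le (hbB i)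
  have hk₂ := hk s t hs hst.le ht
  simp only [update_comm hij.symm, update_eq_self] at hk₁
  rw [hk₁, hk₂]
  ring

theorem HasCommonBisectors.mul_eq_mul {A B z : ι → ℝ}
    (hbis : HasCommonBisectors h i j (Icc A B)) (hij : i ≠ j) (hcont : ContinuousOn h (Icc A B))
    (hpos : ∀ x ∈ Icc A B, 0 < h x) (hz : z ∈ univ.pi fun l => Ioo (A l) (B l))
    {x y : ℝ} (hx : x ∈ Ioo (A i) (B i)) (hy : y ∈ Ioo (A j) (B j)) :
    h z * h (update (update z j y) i x) = h (update z j y) * h (update z i x) := by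
  have hint : IntegrableOn h (Icc A B) := hcont.integrableOn_compact isCompact_Icc
  have hinterior : (univ.pi fun l => Ioo (A l) (B l)) ⊆ Icc A B :=
    pi_univ_Icc A B ▸ pi_mono fun _ _ => Ioo_subset_Icc_self
  have hlim : ∀ w ∈ univ.pi fun l => Ioo (A l) (B l),
      Tendsto (fun δ => boxVol h (fun l => w l - δ) (fun l => w l + δ) / (2 * δ) ^ Fintype.card ι)
        (𝓝[>] 0) (𝓝 (h w)) := fun w hw =>
    tendsto_boxVol_div_pow (isOpen_set_pi finite_univ fun _ _ => isOpen_Ioo)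
      (hcont.mono hinterior) hw
  have hzx : update z i x ∈ univ.pi fun l => Ioo (A l) (B l) :=
    (update_mem_pi_iff_of_mem hz).2 fun _ => hx
  have hzy : update z j y ∈ univ.pi fun l => Ioo (A l) (B l) :=
    (update_mem_pi_iff_of_mem hz).2 fun _ => hy
  have hzyx : update (update z j y) i x ∈ univ.pi fun l => Ioo (A l) (B l) :=
    (update_mem_pi_iff_of_mem hzy).2 fun _ => hx
  refine tendsto_nhds_unique_of_eventuallyEq ((hlim z hz).mul (hlim _ hzyx))
    ((hlim _ hzy).mul (hlim _ hzx)) ?_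
  filter_upwards [self_mem_nhdsWithin, eventually_forall_le_sub_and_forall_add_le hz,
    eventually_forall_le_sub_and_forall_add_le hzyx] with δ hδ hδz hδw
  have hsub : ∀ (w : ι → ℝ) l r,
      (fun k => update w l r k - δ) = update (fun k => w k - δ) l (r - δ) := fun w l r =>
    funext fun k => apply_update (fun _ s => s - δ) w l r k
  have hadd : ∀ (w : ι → ℝ) l r,
      (fun k => update w l r k + δ) = update (fun k => w k + δ) l (r + δ) := fun w l r =>
    funext fun k => apply_update (fun _ s => s + δ) w l r k
  have hlt : ∀ r : ℝ, r - δ < r + δ := fun r => by linarith [mem_Ioi.1 hδ]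
  have hwi := And.intro (hδw.1 i) (hδw.2 i)
  have hwj := And.intro (hδw.1 j) (hδw.2 j)
  simp only [update_self, update_of_ne hij.symm] at hwi hwj
  rw [div_mul_div_comm, div_mul_div_comm]
  simp only [hsub, hadd]
  rw [hbis.boxVol_mul_boxVol hij hint hpos hδz.1 (fun l => hlt (z l)) hδz.2 hwi.1 (hlt x) hwi.2
    hwj.1 (hlt y) hwj.2]

theorem boxVol_piecewise_piecewise_eq_two_pow_mul (hint : IntegrableOn h (Icc a b)) {p : ι → ℝ}
    (hp : ∀ l, p l ∈ Icc (a l) (b l)) {v : ℝ}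
    (hv : ∀ L : Finset ι, boxVol h (L.piecewise p a) (Lᶜ.piecewise p b) = v) {L R : Finset ι}
    (hLR : Disjoint L R) :
    boxVol h (L.piecewise p a) (R.piecewise p b) = 2 ^ (L ∪ R)ᶜ.card * v := by
  induction hn : (L ∪ R)ᶜ.card generalizing L R with
  | zero =>
    obtain rfl : Lᶜ = R := IsCompl.compl_eq
      ⟨hLR, codisjoint_iff.2 (compl_eq_bot.1 (Finset.card_eq_zero.1 hn))⟩
    simpa using hv L
  | succ n ih =>
    obtain ⟨l, hl⟩ := Finset.card_pos.1 (by rw [hn]; exact n.succ_pos)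
    have hcard : ((L ∪ R)ᶜ.erase l).card = n := by rw [Finset.card_erase_of_mem hl, hn]; rfl
    obtain ⟨hlL, hlR⟩ : l ∉ L ∧ l ∉ R := by simpa using hl
    have hsub : Icc (L.piecewise p a) (R.piecewise p b) ⊆ Icc a b :=
      Icc_subset_Icc (L.le_piecewise_of_le_of_le (fun k => (hp k).1) le_rfl)
        (R.piecewise_le_of_le_of_le (fun k => (hp k).2) le_rfl)
    rw [← boxVol_update_add_boxVol_update (i := l) (hint.mono_set hsub)
      (by simpa [hlL, hlR] using hp l), ← Finset.piecewise_insert, ← Finset.piecewise_insert,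
      ih (Finset.disjoint_insert_right.2 ⟨hlL, hLR⟩)
        (by rwa [Finset.union_insert, Finset.compl_insert]),
      ih (Finset.disjoint_insert_left.2 ⟨hlR, hLR⟩)
        (by rwa [Finset.insert_union, Finset.compl_insert])]
    ring

theorem hasCommonBisectors_of_forall_exists_boxVol_piecewise_eq {U : Set (ι → ℝ)} (hij : i ≠ j)
    (hcont : ContinuousOn h U)
    (hsplit : ∀ a b : ι → ℝ, (∀ l, a l < b l) → Icc a b ⊆ U →
      ∃ p : ι → ℝ, (∀ l, p l ∈ Ioo (a l) (b l)) ∧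
        ∃ v, ∀ L : Finset ι, boxVol h (L.piecewise p a) (Lᶜ.piecewise p b) = v) :
    HasCommonBisectors h i j U := by
  intro a b hab hsub
  obtain ⟨p, hp, v, hv⟩ := hsplit a b hab hsub
  have hmerge : ∀ L R : Finset ι, Disjoint L R →
      boxVol h (L.piecewise p a) (R.piecewise p b) = 2 ^ (L ∪ R)ᶜ.card * v := fun L R hLR =>
    boxVol_piecewise_piecewise_eq_two_pow_mul
      ((hcont.mono hsub).integrableOn_compact isCompact_Icc) (fun l => Ioo_subset_Icc_self (hp l))
      hv hLR
  refine ⟨p i, hp i, p j, hp j, sub_eq_zero.2 ?_, sub_eq_zero.2 ?_⟩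
  · simpa [Finset.piecewise_singleton, Finset.piecewise_insert] using
      (hmerge ∅ {i} (by simp)).trans (hmerge {i} ∅ (by simp)).symm
  · simpa [Finset.piecewise_singleton, Finset.piecewise_insert] using
      (hmerge ∅ {i, j} (by simp)).trans (hmerge {i} {j} (by simpa using hij)).symm

end Boxes

section PartialDerivatives

variable {ι : Type*} [DecidableEq ι] {f : (ι → ℝ) → ℝ} {i j : ι} {z : ι → ℝ}

/-- The partial derivative of `f` in the direction of the `i`-th coordinate; it has the junk value
`0` where `f` is not differentiable. -/
def partialDeriv (f : (ι → ℝ) → ℝ) (i : ι) (x : ι → ℝ) : ℝ :=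
  fderiv ℝ f x (Pi.single i 1)

theorem hasDerivAt_update_partialDeriv [Finite ι] (hf : DifferentiableAt ℝ f z) :
    HasDerivAt (fun t => f (update z i t)) (partialDeriv f i z) (z i) := by
  have := Fintype.ofFinite ι
  have hfz : HasFDerivAt f (fderiv ℝ f z) (update z i (z i)) := by simpa using hf.hasFDerivAt
  exact hfz.comp_hasDerivAt _ (hasDerivAt_update z i (z i))

theorem eq_of_forall_partialDeriv_eq_zero [Finite ι] {U : Set (ι → ℝ)} (hU : Convex ℝ U)
    (hf : ∀ z ∈ U, DifferentiableAt ℝ f z) (hzero : ∀ j, j ≠ i → ∀ z ∈ U, partialDeriv f j z = 0)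
    {x y : ι → ℝ} (hx : x ∈ U) (hy : y ∈ U) (hxy : x i = y i) : f x = f y := by
  have := Fintype.ofFinite ι
  obtain ⟨z, hz, hmvt⟩ :=
    domain_mvt (fun z hz => (hf z hz).hasFDerivAt.hasFDerivWithinAt) hU hx hy
  have hfderiv : fderiv ℝ f z (y - x) = ∑ j, (y - x) j • partialDeriv f j z := by
    conv_lhs => rw [pi_eq_sum_univ' (y - x), map_sum]
    simp [partialDeriv]
  rw [hfderiv, Finset.sum_eq_zero fun j _ => ?_, sub_eq_zero] at hmvt
  · exact hmvt.symm
  · obtain rfl | hji := eq_or_ne j i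
    · simp [hxy]
    · rw [hzero j hji z (hU.segment_subset hx hy hz), smul_zero]

variable [Fintype ι]

theorem contDiffAt_partialDeriv (hf : ContDiffAt ℝ 2 f z) :
    ContDiffAt ℝ 1 (partialDeriv f i) z :=
  (hf.fderiv_right le_rfl).clm_apply contDiffAt_const

theorem partialDeriv_partialDeriv_eq_zero_of_eventually_add_eq_add (hij : i ≠ j)
    (hf : ContDiffAt ℝ 2 f z)
    (hadd : ∀ᶠ y in 𝓝 (z j), ∀ᶠ x in 𝓝 (z i),
      f z + f (update (update z j y) i x) = f (update z j y) + f (update z i x)) :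
    partialDeriv (partialDeriv f i) j z = 0 := by
  have hdiff : ∀ᶠ y in 𝓝 (z j), DifferentiableAt ℝ f (update z j y) := by
    have htends : Tendsto (update z j) (𝓝 (z j)) (𝓝 z) := by
      simpa using (continuous_const.update j continuous_id : Continuous (update z j)).tendsto (z j)
    exact htends.eventually <| (hf.eventually (by simp)).mono
      fun x hx => hx.differentiableAt two_ne_zero
  have hconst : (fun y => partialDeriv f i (update z j y)) =ᶠ[𝓝 (z j)]
      fun _ => partialDeriv f i z := by
    filter_upwards [hadd, hdiff] with y hy hfy
    have hleft := hasDerivAt_update_partialDeriv (i := i) hfy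
    have hright := (hasDerivAt_update_partialDeriv (i := i)
      (hf.differentiableAt two_ne_zero)).const_add (f (update z j y) - f z)
    rw [update_of_ne hij] at hleft
    exact hleft.unique (hright.congr_of_eventuallyEq (hy.mono fun x hx => by linarith))
  exact (hasDerivAt_update_partialDeriv
    ((contDiffAt_partialDeriv hf).differentiableAt one_ne_zero)).unique
    ((hasDerivAt_const _ _).congr_of_eventuallyEq hconst)

theorem sub_eq_sub_of_partialDeriv_partialDeriv_eq_zero {a b w : ι → ℝ}
    (hf : ∀ z ∈ Icc a b, ContDiffAt ℝ 2 f z)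
    (hzero : ∀ j, j ≠ i → ∀ z ∈ Icc a b, partialDeriv (partialDeriv f i) j z = 0)
    (hw : w ∈ Icc a b) (hwa : w i = a i) {t : ℝ} (ht : t ∈ Icc (a i) (b i)) :
    f (update w i t) - f w = f (update a i t) - f a := by
  have hupdate : ∀ v ∈ Icc a b, ∀ s ∈ Icc (a i) (b i), update v i s ∈ Icc a b := fun v hv s hs =>
    ⟨le_update_iff.2 ⟨hs.1, fun l _ => hv.1 l⟩, update_le_iff.2 ⟨hs.2, fun l _ => hv.2 l⟩⟩
  have ha : a ∈ Icc a b := left_mem_Icc.2 (hw.1.trans hw.2)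
  have hderiv : ∀ v ∈ Icc a b, ∀ s ∈ Icc (a i) (b i),
      HasDerivAt (fun s => f (update v i s)) (partialDeriv f i (update v i s)) s :=
    fun v hv s hs => by
      simpa using hasDerivAt_update_partialDeriv (i := i)
        ((hf _ (hupdate v hv s hs)).differentiableAt two_ne_zero)
  have hdiff : ∀ s ∈ Icc (a i) (b i),
      HasDerivAt (fun s => f (update w i s) - f (update a i s)) 0 s := fun s hs => by
    have heq := eq_of_forall_partialDeriv_eq_zero (convex_Icc a b)
      (fun z hz => (contDiffAt_partialDeriv (hf z hz)).differentiableAt one_ne_zero) hzero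
      (hupdate w hw s hs) (hupdate a ha s hs) (by simp)
    simpa [heq] using (hderiv w hw s hs).fun_sub (hderiv a ha s hs)
  have hconst := constant_of_has_deriv_right_zero
    (fun s hs => (hdiff s hs).continuousAt.continuousWithinAt)
    (fun s hs => (hdiff s (Ico_subset_Icc_self hs)).hasDerivWithinAt) t ht
  rw [update_eq_self, ← hwa, update_eq_self] at hconst
  linarith

theorem sub_eq_sum_sub_of_partialDeriv_partialDeriv_eq_zero {a b : ι → ℝ}
    (hf : ∀ z ∈ Icc a b, ContDiffAt ℝ 2 f z)
    (hzero : ∀ i j, i ≠ j → ∀ z ∈ Icc a b, partialDeriv (partialDeriv f i) j z = 0) {x : ι → ℝ}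
    (hx : x ∈ Icc a b) : f x - f a = ∑ l, (f (update a l (x l)) - f a) := by
  suffices ∀ s : Finset ι, f (s.piecewise x a) - f a = ∑ l ∈ s, (f (update a l (x l)) - f a) by
    simpa using this Finset.univ
  intro s
  induction s using Finset.induction with
  | empty => simp
  | insert i s hi ih =>
    have hmem : s.piecewise x a ∈ Icc a b :=
      ⟨s.le_piecewise_of_le_of_le hx.1 le_rfl,
        s.piecewise_le_of_le_of_le hx.2 (hx.1.trans hx.2)⟩
    rw [Finset.sum_insert hi, ← ih, Finset.piecewise_insert,
      ← sub_eq_sub_of_partialDeriv_partialDeriv_eq_zero hf (fun j hj => hzero i j hj.symm) hmem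
        (s.piecewise_eq_of_notMem _ _ hi) ⟨hx.1 i, hx.2 i⟩, sub_add_sub_cancel]

end PartialDerivatives

theorem eq_mul_prod_of_partialDeriv_partialDeriv_log_eq_zero {ι : Type*} [Fintype ι]
    [DecidableEq ι] {h : (ι → ℝ) → ℝ} {a b : ι → ℝ} (hh : ∀ z ∈ Icc a b, ContDiffAt ℝ 2 h z)
    (hpos : ∀ z ∈ Icc a b, 0 < h z)
    (hzero : ∀ i j, i ≠ j → ∀ z ∈ Icc a b,
      partialDeriv (partialDeriv (fun y => Real.log (h y)) i) j z = 0) {x : ι → ℝ}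
    (hx : x ∈ Icc a b) : h x = h a * ∏ l, h (update a l (x l)) / h a := by
  have hsum := sub_eq_sum_sub_of_partialDeriv_partialDeriv_eq_zero
    (fun z hz => (hh z hz).log (hpos z hz).ne') hzero hx
  have ha := hpos a (left_mem_Icc.2 (hx.1.trans hx.2))
  have hupdate : ∀ l, 0 < h (update a l (x l)) := fun l => hpos _
    ⟨le_update_iff.2 ⟨hx.1 l, fun _ _ => le_rfl⟩,
      update_le_iff.2 ⟨hx.2 l, fun k _ => (hx.1.trans hx.2) k⟩⟩
  refine Real.log_injOn_pos (hpos x hx)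
    (mul_pos ha (Finset.prod_pos fun l _ => div_pos (hupdate l) ha)) ?_
  rw [Real.log_mul ha.ne' (Finset.prod_ne_zero_iff.2 fun l _ => (div_pos (hupdate l) ha).ne'),
    Real.log_prod fun l _ => (div_pos (hupdate l) ha).ne', ← sub_eq_iff_eq_add', hsum]
  exact Finset.sum_congr rfl fun l _ => (Real.log_div (hupdate l).ne' ha.ne').symm

theorem boxVol_eq_mul_prod_setIntegral {ι : Type*} [Fintype ι] {h : (ι → ℝ) → ℝ} {a b : ι → ℝ}
    {g : ι → ℝ → ℝ} {c : ℝ} (hprod : ∀ x ∈ Icc a b, h x = c * ∏ l, g l (x l)) :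
    boxVol h a b = c * ∏ l, ∫ t in Icc (a l) (b l), g l t := by
  rw [boxVol, setIntegral_congr_fun measurableSet_Icc hprod, integral_const_mul, ← pi_univ_Icc,
    volume_pi, Measure.restrict_pi_pi, integral_fintype_prod_eq_prod]

theorem exists_mem_Ioo_setIntegral_Icc_eq_setIntegral_Icc {f : ℝ → ℝ} {a b : ℝ} (hab : a < b)
    (hcont : ContinuousOn f (Icc a b)) (hpos : ∀ x ∈ Ioo a b, 0 < f x) :
    ∃ p ∈ Ioo a b, ∫ x in Icc a p, f x = ∫ x in Icc p b, f x := by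
  have hint : IntervalIntegrable f volume a b := hcont.intervalIntegrable_of_Icc hab.le
  have htotal : 0 < ∫ x in a..b, f x :=
    intervalIntegral.intervalIntegral_pos_of_pos_on hint hpos hab
  have hprim : ContinuousOn (fun t => ∫ x in a..t, f x) (Icc a b) := by
    rw [← uIcc_of_le hab.le] at hcont ⊢
    exact intervalIntegral.continuousOn_primitive_interval
      (hcont.integrableOn_compact isCompact_uIcc)
  obtain ⟨p, hp, hhalf⟩ := intermediate_value_Ioo hab.le hprim
    (show (∫ x in a..b, f x) / 2 ∈ _ from ⟨by simpa using htotal, by simpa using htotal⟩)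
  refine ⟨p, hp, ?_⟩
  have hsplit := intervalIntegral.integral_add_adjacent_intervals
    (hint.mono_set (uIcc_subset_uIcc_left (Icc_subset_uIcc (Ioo_subset_Icc_self hp))))
    (hint.mono_set (uIcc_subset_uIcc_right (Icc_subset_uIcc (Ioo_subset_Icc_self hp))))
  rw [integral_Icc_eq_integral_Ioc, integral_Icc_eq_integral_Ioc,
    ← intervalIntegral.integral_of_le hp.1.le, ← intervalIntegral.integral_of_le hp.2.le]
  dsimp only at hhalf
  linarith

section SplitVol

variable {m : ℕ} {h : (Fin m → ℝ) → ℝ} {a b p : Fin m → ℝ}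

theorem splitVol_eq_boxVol_piecewise (h : (Fin m → ℝ) → ℝ) (a b p : Fin m → ℝ)
    (L : Finset (Fin m)) :
    splitVol h a b p m (fun l => decide (l ∈ L)) =
      boxVol h (L.piecewise p a) (Lᶜ.piecewise p b) := by
  simp only [splitVol, boxVol, Fin.is_lt, true_and, decide_eq_true_eq, ite_not,
    Finset.piecewise_compl]
  rfl

theorem splitVol_eq_mul_prod_setIntegral {g : Fin m → ℝ → ℝ} {c : ℝ}
    (hprod : ∀ x ∈ Icc a b, h x = c * ∏ l, g l (x l)) (hp : ∀ l, p l ∈ Icc (a l) (b l))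
    (hhalf : ∀ l, ∫ t in Icc (a l) (p l), g l t = ∫ t in Icc (p l) (b l), g l t) (k : ℕ)
    (ε : Fin m → Bool) :
    splitVol h a b p k ε =
      c * ∏ l, ∫ t in Icc (a l) (if (l : ℕ) < k then p l else b l), g l t := by
  have hsub : Icc (fun l => if l.val < k ∧ ε l then p l else a l)
      (fun l => if l.val < k ∧ ¬ ε l then p l else b l) ⊆ Icc a b :=
    Icc_subset_Icc (fun l => by dsimp only; split_ifs; exacts [(hp l).1, le_rfl])
      (fun l => by dsimp only; split_ifs; exacts [(hp l).2, le_rfl])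
  refine (boxVol_eq_mul_prod_setIntegral fun x hx => hprod x (hsub hx)).trans ?_
  congr 1
  refine Finset.prod_congr rfl fun l _ => ?_
  by_cases hl : (l : ℕ) < k <;> cases hε : ε l <;> simp [hl, hhalf l]

theorem exists_forall_splitVol_eq_splitVol (hab : ∀ l, a l < b l)
    (hh : ∀ z ∈ Icc a b, ContDiffAt ℝ 2 h z) (hpos : ∀ z ∈ Icc a b, 0 < h z)
    (hzero : ∀ i j, i ≠ j → ∀ z ∈ Icc a b, logpd2 h i j z = 0) :
    ∃ p : Fin m → ℝ, (∀ l, p l ∈ Ioo (a l) (b l)) ∧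
      ∀ k ε ε', splitVol h a b p k ε = splitVol h a b p k ε' := by
  have ha : a ∈ Icc a b := left_mem_Icc.2 fun l => (hab l).le
  have hedge : ∀ l, ∀ t ∈ Icc (a l) (b l), update a l t ∈ Icc a b := fun l t ht =>
    ⟨le_update_iff.2 ⟨ht.1, fun _ _ => le_rfl⟩, update_le_iff.2 ⟨ht.2, fun k _ => (hab k).le⟩⟩
  have hcont : ContinuousOn h (Icc a b) := fun z hz => (hh z hz).continuousAt.continuousWithinAt
  choose p hp hhalf using fun l =>
    exists_mem_Ioo_setIntegral_Icc_eq_setIntegral_Icc (f := fun t => h (update a l t) / h a)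
      (hab l) ((hcont.comp (by fun_prop) (hedge l)).div_const _) fun t ht =>
        div_pos (hpos _ (hedge l t (Ioo_subset_Icc_self ht))) (hpos a ha)
  have hsplit := splitVol_eq_mul_prod_setIntegral
    (fun x hx => eq_mul_prod_of_partialDeriv_partialDeriv_log_eq_zero hh hpos hzero hx)
    (fun l => Ioo_subset_Icc_self (hp l)) hhalf
  exact ⟨p, hp, fun k ε ε' => (hsplit k ε).trans (hsplit k ε').symm⟩

theorem hasCommonBisectors_of_forall_exists_splitVol_eq_splitVol {U : Set (Fin m → ℝ)}
    {i j : Fin m} (hij : i ≠ j) (hcont : ContinuousOn h U)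
    (hsplit : ∀ a b : Fin m → ℝ, (∀ l, a l < b l) → Icc a b ⊆ U →
      ∃ p : Fin m → ℝ, (∀ l, p l ∈ Ioo (a l) (b l)) ∧
        ∀ ε ε', splitVol h a b p m ε = splitVol h a b p m ε') :
    HasCommonBisectors h i j U := by
  refine hasCommonBisectors_of_forall_exists_boxVol_piecewise_eq hij hcont fun a b hab hsub => ?_
  obtain ⟨p, hp, heq⟩ := hsplit a b hab hsub
  exact ⟨p, hp, splitVol h a b p m fun _ => false, fun L => by
    rw [← splitVol_eq_boxVol_piecewise]
    exact heq _ _⟩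

theorem logpd2_eq_zero_of_hasCommonBisectors {U : Set (Fin m → ℝ)} (hU : IsOpen U)
    (hh : ContDiffOn ℝ 2 h U) (hpos : ∀ z ∈ U, 0 < h z) {i j : Fin m} (hij : i ≠ j)
    (hbis : HasCommonBisectors h i j U) {z : Fin m → ℝ} (hz : z ∈ U) : logpd2 h i j z = 0 := by
  obtain ⟨r, hr, hball⟩ := Metric.nhds_basis_closedBall.mem_iff.1 (hU.mem_nhds hz)
  have hsub : Icc (fun l => z l - r) (fun l => z l + r) ⊆ U := by
    simpa [closedBall_pi z hr.le, Real.closedBall_eq_Icc, pi_univ_Icc] using hball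
  have hinterior : (univ.pi fun l => Ioo (z l - r) (z l + r)) ⊆ U := fun w hw =>
    hsub ⟨fun l => (hw l trivial).1.le, fun l => (hw l trivial).2.le⟩
  have hne : ∀ w ∈ univ.pi fun l => Ioo (z l - r) (z l + r), h w ≠ 0 := fun w hw =>
    (hpos w (hinterior hw)).ne'
  have hmem : ∀ l, Ioo (z l - r) (z l + r) ∈ 𝓝 (z l) := fun l =>
    Ioo_mem_nhds (sub_lt_self _ hr) (lt_add_of_pos_right _ hr)
  have hz' : z ∈ univ.pi fun l => Ioo (z l - r) (z l + r) := fun l _ => mem_of_mem_nhds (hmem l)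
  refine partialDeriv_partialDeriv_eq_zero_of_eventually_add_eq_add hij
    ((hh.contDiffAt (hU.mem_nhds hz)).log (hpos z hz).ne') ?_
  filter_upwards [hmem j] with y hy
  filter_upwards [hmem i] with x hx
  have hzx := (update_mem_pi_iff_of_mem hz').2 fun _ => hx
  have hzy := (update_mem_pi_iff_of_mem hz').2 fun _ => hy
  have hzyx := (update_mem_pi_iff_of_mem hzy).2 fun _ => hx
  rw [← Real.log_mul (hne z hz') (hne _ hzyx), ← Real.log_mul (hne _ hzy) (hne _ hzx),
    (hbis.mono hsub).mul_eq_mul hij (hh.continuousOn.mono hsub) (fun w hw => hpos w (hsub hw)) hz'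
      hx hy]

end SplitVol

theorem stmt19_general {m : ℕ} {U : Set (Fin m → ℝ)} (hU : IsOpen U) {h : (Fin m → ℝ) → ℝ}
    (hh : ContDiffOn ℝ 2 h U) (hpos : ∀ x ∈ U, 0 < h x) :
    (∀ i j : Fin m, i ≠ j → ∀ x ∈ U, logpd2 h i j x = 0) ↔
    (∀ a b : Fin m → ℝ, (∀ l, a l < b l) → Icc a b ⊆ U →
      ∀ k : ℕ, 1 ≤ k → k ≤ m →
      ∃ p : Fin m → ℝ, (∀ l : Fin m, (l : ℕ) < k → p l ∈ Ioo (a l) (b l)) ∧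
        ∀ ε ε' : Fin m → Bool, splitVol h a b p k ε = splitVol h a b p k ε') := by
  refine ⟨fun hzero a b hab hsub k _ _ => ?_, fun hsplit i j hij x hx => ?_⟩
  · obtain ⟨p, hp, heq⟩ := exists_forall_splitVol_eq_splitVol hab
      (fun z hz => hh.contDiffAt (hU.mem_nhds (hsub hz))) (fun z hz => hpos z (hsub hz))
      fun i j hij z hz => hzero i j hij z (hsub hz)
    exact ⟨p, fun l _ => hp l, heq k⟩
  · refine logpd2_eq_zero_of_hasCommonBisectors hU hh hpos hij
      (hasCommonBisectors_of_forall_exists_splitVol_eq_splitVol hij hh.continuousOn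
        fun a b hab hsub => ?_) hx
    obtain ⟨p, hp, heq⟩ := hsplit a b hab hsub m i.pos le_rfl
    exact ⟨p, fun l => hp l l.is_lt, heq⟩

end

/-- On an open box `U`, the nonuniformity tensor of the codimension-1
web with density `h` vanishes iff the splitting condition holds: every closed box
`K ⊆ U` can, for each `k ∈ {1,…,m}`, be subdivided by one leaf of each of the first `k`
coordinate-hyperplane foliations into `2^k` subboxes of equal `h`-volume. -/
theorem stmt19 {m : ℕ} (hm : 2 ≤ m)
    (I : Fin m → Set ℝ) (hIopen : ∀ k, IsOpen (I k)) (hIconn : ∀ k, IsPreconnected (I k))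
    (h : (Fin m → ℝ) → ℝ)
    (hsm : ContDiffOn ℝ (⊤ : ℕ∞) h (Set.univ.pi I)) (hpos : ∀ x ∈ Set.univ.pi I, 0 < h x) :
    (∀ i j : Fin m, i ≠ j → ∀ x ∈ Set.univ.pi I, logpd2 h i j x = 0) ↔
    (∀ a b : Fin m → ℝ, (∀ l, a l < b l) → Set.Icc a b ⊆ Set.univ.pi I →
      ∀ k : ℕ, 1 ≤ k → k ≤ m →
      ∃ p : Fin m → ℝ, (∀ l : Fin m, (l : ℕ) < k → p l ∈ Set.Ioo (a l) (b l)) ∧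
        ∀ ε ε' : Fin m → Bool, splitVol h a b p k ε = splitVol h a b p k ε') :=
  stmt19_general (isOpen_set_pi Set.finite_univ fun k _ => hIopen k)
    (hsm.of_le (WithTop.coe_le_coe.2 (le_top : (2 : ℕ∞) ≤ ⊤))) hpos
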